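/- arXiv:1308.3072 — 2 statements merged into one kernel-verified Lean document; each statement's English description precedes it below -/
import Mathlib

section
/- For all x, y ∈ ℝ³ with x ≠ y and all indices i, j ∈ {1,2,3}, the following two series converge absolutely and the Kupradze matrix satisfies Γ^ω(x,y)_{ij} = (1/(4π)) Σ_{l=0}^∞ (i^l/(l!(l+2))) (1/ω²) ((l+1)κ_s^{l+2} + κ_p^{l+2}) |x−y|^{l−1} δ_{ij} − (1/(4π)) Σ_{l=0}^∞ (i^l/(l!(l+2))) ((l−1)/ω²) (κ_s^{l+2} − κ_p^{l+2}) |x−y|^{l−3} (x_i−y_i)(x_j−y_j), where i in i^l denotes the imaginary unit and δ_{ij} the Kronecker delta. -/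
noncomputable section
open Real

abbrev E3 := EuclideanSpace ℝ (Fin 3)

/-- Free-space fundamental solution of the Helmholtz equation,
`Φ_κ(x,y) = exp(iκ|x−y|)/(4π|x−y|)`. -/
def Phi (κ : ℝ) (x y : E3) : ℂ :=
  Complex.exp (Complex.I * κ * ‖x - y‖) / (4 * Real.pi * ‖x - y‖)

/-- Transversal wavenumber `κ_s = ω/c_s = ω/√μ`. -/
def kappaS (mu om : ℝ) : ℝ := om / Real.sqrt mu

/-- Longitudinal wavenumber `κ_p = ω/c_p = ω/√(λ+2μ)`. -/
def kappaP (lam mu om : ℝ) : ℝ := om / Real.sqrt (lam + 2 * mu)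

/-- The Kupradze matrix of the fundamental solution of the Navier equation,
entrywise: `Γ^ω(x,y)_{ij} = (1/μ)Φ_{κ_s}δ_{ij} + (1/ω²)∂²_{x_i x_j}(Φ_{κ_s}−Φ_{κ_p})`. -/
def Gamma (lam mu om : ℝ) (x y : E3) (i j : Fin 3) : ℂ :=
  (1 / (mu : ℂ)) * Phi (kappaS mu om) x y * (if i = j then 1 else 0)
  + (1 / (om : ℂ) ^ 2) *
      fderiv ℝ
        (fun x' : E3 =>
          fderiv ℝ
            (fun x'' : E3 => Phi (kappaS mu om) x'' y - Phi (kappaP lam mu om) x'' y)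
            x' (EuclideanSpace.single j 1))
        x (EuclideanSpace.single i 1)

/-- `l`-th term of the first series in the expansion (kupradzeten1):
`(1/(4π)) (i^l/(l!(l+2))) (1/ω²) ((l+1)κ_s^{l+2} + κ_p^{l+2}) |x−y|^{l−1} δ_{ij}`. -/
def gammaSeries1 (lam mu om : ℝ) (x y : E3) (i j : Fin 3) (l : ℕ) : ℂ :=
  (1 / (4 * (Real.pi : ℂ))) * (Complex.I ^ l / ((l.factorial : ℂ) * ((l : ℂ) + 2)))
    * (1 / (om : ℂ) ^ 2)
    * (((l : ℂ) + 1) * ((kappaS mu om : ℝ) : ℂ) ^ (l + 2)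
        + ((kappaP lam mu om : ℝ) : ℂ) ^ (l + 2))
    * ((‖x - y‖ ^ ((l : ℤ) - 1) : ℝ) : ℂ)
    * (if i = j then 1 else 0)

/-- `l`-th term of the second series in the expansion (kupradzeten1):
`(1/(4π)) (i^l/(l!(l+2))) ((l−1)/ω²) (κ_s^{l+2} − κ_p^{l+2}) |x−y|^{l−3} (x_i−y_i)(x_j−y_j)`. -/
def gammaSeries2 (lam mu om : ℝ) (x y : E3) (i j : Fin 3) (l : ℕ) : ℂ :=
  (1 / (4 * (Real.pi : ℂ))) * (Complex.I ^ l / ((l.factorial : ℂ) * ((l : ℂ) + 2)))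
    * (((l : ℂ) - 1) / (om : ℂ) ^ 2)
    * (((kappaS mu om : ℝ) : ℂ) ^ (l + 2) - ((kappaP lam mu om : ℝ) : ℂ) ^ (l + 2))
    * ((‖x - y‖ ^ ((l : ℤ) - 3) : ℝ) : ℂ)
    * ((x i - y i : ℝ) : ℂ) * ((x j - y j : ℝ) : ℂ)

lemma aux_norm (x y : E3) (hxy : x ≠ y) :
    HasFDerivAt (fun x' : E3 => ‖x' - y‖) ((‖x - y‖)⁻¹ • innerSL ℝ (x - y)) x := by
  have h0 : ‖x - y‖ ≠ 0 := norm_ne_zero_iff.mpr (sub_ne_zero.mpr hxy)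
  have h1 : HasFDerivAt (fun x' : E3 => ‖x' - y‖ ^ 2) (2 • innerSL ℝ (x - y)) x := by
    have := (hasStrictFDerivAt_norm_sq (x - y)).hasFDerivAt.comp x
      ((hasFDerivAt_id x).sub_const y)
    refine HasFDerivAt.congr_fderiv this ?_
    ext v
    simp
  have h2 := h1.sqrt (pow_ne_zero 2 h0)
  simp only [Real.sqrt_sq (norm_nonneg _)] at h2
  refine h2.congr_fderiv ?_
  ext v
  simp
  field_simp

lemma aux_radial (f : ℝ → ℂ) (f' : ℂ) (x y : E3) (hxy : x ≠ y)
    (hf : HasDerivAt f f' ‖x - y‖) :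
    HasFDerivAt (fun x' : E3 => f ‖x' - y‖)
      (((‖x - y‖)⁻¹ • innerSL ℝ (x - y)).smulRight f') x :=
  HasFDerivAt.congr_fderiv (HasFDerivAt.comp (g := f) x hf.hasFDerivAt (aux_norm x y hxy))
    (by ext v; simp; ring)

lemma aux_d1 (a : ℂ) (r : ℝ) (hr : r ≠ 0) :
    HasDerivAt (fun r : ℝ => Complex.exp (a * r) / (4 * Real.pi * r))
      (Complex.exp (a * r) * (a * r - 1) / (4 * Real.pi * r ^ 2)) r := by
  have hr' : (r : ℂ) ≠ 0 := by exact_mod_cast hr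
  have hp : (Real.pi : ℂ) ≠ 0 := by exact_mod_cast Real.pi_ne_zero
  have h1 : HasDerivAt (fun r : ℝ => (r : ℂ)) 1 r := Complex.ofRealCLM.hasDerivAt
  have h2 := ((h1.const_mul a).cexp).fun_div (h1.const_mul (4 * (Real.pi : ℂ)))
    (by simp [hr, Real.pi_ne_zero])
  refine h2.congr_deriv ?_
  field_simp

lemma aux_d2 (a : ℂ) (r : ℝ) (hr : r ≠ 0) :
    HasDerivAt (fun r : ℝ => Complex.exp (a * r) * (a * r - 1) / (4 * Real.pi * r ^ 3))
      (Complex.exp (a * r) * (a ^ 2 * r ^ 2 - 3 * a * r + 3) / (4 * Real.pi * r ^ 4)) r := by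
  have hr' : (r : ℂ) ≠ 0 := by exact_mod_cast hr
  have hp : (Real.pi : ℂ) ≠ 0 := by exact_mod_cast Real.pi_ne_zero
  have h1 : HasDerivAt (fun r : ℝ => (r : ℂ)) 1 r := Complex.ofRealCLM.hasDerivAt
  have h2 := (((h1.const_mul a).cexp).fun_mul ((h1.const_mul a).sub_const 1)).fun_div
    ((h1.fun_pow 3).const_mul (4 * (Real.pi : ℂ)))
    (by simp [hr, Real.pi_ne_zero])
  refine h2.congr_deriv ?_
  field_simp
  norm_num
  ring

lemma aux_inner (v : E3) (j : Fin 3) : inner ℝ v (EuclideanSpace.single j 1) = v j := by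
  simp [EuclideanSpace.inner_single_right]

lemma aux_phi (k : ℝ) (x y : E3) (hxy : x ≠ y) :
    HasFDerivAt (fun x' : E3 => Phi k x' y)
      (((‖x - y‖)⁻¹ • innerSL ℝ (x - y)).smulRight
        (Complex.exp (Complex.I * k * ‖x - y‖) * (Complex.I * k * ‖x - y‖ - 1) /
          (4 * Real.pi * ‖x - y‖ ^ 2) : ℂ)) x :=
  aux_radial _ _ x y hxy
    (aux_d1 (Complex.I * k) _ (norm_ne_zero_iff.mpr (sub_ne_zero.mpr hxy)))

def auxG (k : ℝ) (y : E3) (j : Fin 3) (x : E3) : ℂ :=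
  Complex.exp (Complex.I * k * ‖x - y‖) * (Complex.I * k * ‖x - y‖ - 1) /
          (4 * Real.pi * ‖x - y‖ ^ 3) * ((x j - y j : ℝ) : ℂ)

lemma aux_fd1 (k k' : ℝ) (x y : E3) (hxy : x ≠ y) (j : Fin 3) :
    fderiv ℝ (fun x'' : E3 => Phi k x'' y - Phi k' x'' y) x (EuclideanSpace.single j 1)
     = auxG k y j x - auxG k' y j x := by
  have h0 : (‖x - y‖ : ℂ) ≠ 0 := by
    exact_mod_cast norm_ne_zero_iff.mpr (sub_ne_zero.mpr hxy)
  rw [((aux_phi k x y hxy).fun_sub (aux_phi k' x y hxy)).fderiv]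
  simp only [_root_.sub_apply, ContinuousLinearMap.smulRight_apply,
    _root_.smul_apply, innerSL_apply_apply, aux_inner, auxG]
  simp only [Complex.real_smul, smul_eq_mul, PiLp.sub_apply]
  push_cast
  field_simp

lemma aux_fd2 (k : ℝ) (x y : E3) (hxy : x ≠ y) (j : Fin 3) :
    ∃ L : E3 →L[ℝ] ℂ, HasFDerivAt (auxG k y j) L x ∧ ∀ i : Fin 3,
      L (EuclideanSpace.single i 1) =
        (if i = j then 1 else 0) * (Complex.exp (Complex.I * k * ‖x - y‖) *
          (Complex.I * k * ‖x - y‖ - 1) / (4 * Real.pi * ‖x - y‖ ^ 3)) +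
        Complex.exp (Complex.I * k * ‖x - y‖) * ((Complex.I * k) ^ 2 * ‖x - y‖ ^ 2
          - 3 * (Complex.I * k) * ‖x - y‖ + 3) / (4 * Real.pi * ‖x - y‖ ^ 5)
          * ((x i - y i : ℝ) : ℂ) * ((x j - y j : ℝ) : ℂ) := by
  have hn := norm_ne_zero_iff.mpr (sub_ne_zero.mpr hxy)
  have h0 : (‖x - y‖ : ℂ) ≠ 0 := by exact_mod_cast hn
  have h1 := aux_radial _ _ x y hxy (aux_d2 (Complex.I * k) _ hn)
  have h2 : HasFDerivAt (fun x' : E3 => ((x' j - y j : ℝ) : ℂ))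
      (Complex.ofRealCLM.comp (EuclideanSpace.proj j : E3 →L[ℝ] ℝ)) x :=
    Complex.ofRealCLM.hasFDerivAt.comp x
      (((EuclideanSpace.proj j : E3 →L[ℝ] ℝ).hasFDerivAt).sub_const (y j))
  refine ⟨_, h1.mul h2, fun i => ?_⟩
  simp only [_root_.add_apply, ContinuousLinearMap.smulRight_apply,
    _root_.smul_apply, innerSL_apply_apply, aux_inner,
    ContinuousLinearMap.comp_apply]
  have h3 : (Complex.ofRealCLM ((EuclideanSpace.proj j : E3 →L[ℝ] ℝ)
      (EuclideanSpace.single i 1))) = if i = j then 1 else 0 := by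
    by_cases h : i = j
    · simp [h]
    · simp [h, Ne.symm h]
  rw [h3]
  simp only [Complex.real_smul, smul_eq_mul, PiLp.sub_apply]
  push_cast
  field_simp

lemma aux_cg {f g : ℕ → ℂ} {a b : ℂ} (h : HasSum g b) (hf : ∀ l, f l = g l) (ha : a = b) :
    HasSum f a := by
  rw [ha, funext hf]
  exact h

lemma aux_A (z : ℂ) : HasSum (fun l : ℕ => z ^ l / (l.factorial : ℂ)) (Complex.exp z) := by
  rw [Complex.exp_eq_exp_ℂ]
  exact NormedSpace.expSeries_div_hasSum_exp z

lemma aux_B (z : ℂ) : HasSum (fun l : ℕ => z ^ (l + 2) / ((l.factorial : ℂ) * ((l : ℂ) + 2)))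
    (Complex.exp z * (z - 1) + 1) := by
  have h1 := ((hasSum_nat_add_iff' 1).mpr (aux_A z)).mul_left z
  have h2 := (hasSum_nat_add_iff' 2).mpr (aux_A z)
  refine aux_cg (h1.sub h2) (fun l => ?_) ?_
  · have h3 : (l : ℂ) + 2 ≠ 0 := by exact_mod_cast (by omega : l + 2 ≠ 0)
    have h4 : (l : ℂ) + 1 ≠ 0 := by exact_mod_cast (by omega : l + 1 ≠ 0)
    have h5 : (l.factorial : ℂ) ≠ 0 := by exact_mod_cast l.factorial_ne_zero
    simp only [Nat.factorial_succ]
    push_cast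
    have h6 : (l : ℂ) + 1 + 1 ≠ 0 := by exact_mod_cast (by omega : l + 1 + 1 ≠ 0)
    field_simp
    ring
  · simp [Finset.sum_range_succ]
    ring

lemma aux_C (z : ℂ) :
    HasSum (fun l : ℕ => ((l : ℂ) - 1) * (z ^ (l + 2) / ((l.factorial : ℂ) * ((l : ℂ) + 2))))
    (Complex.exp z * (z ^ 2 - 3 * z + 3) - 3) := by
  refine aux_cg (((aux_A z).mul_left (z ^ 2)).sub ((aux_B z).mul_left 3)) (fun l => ?_) ?_
  · have h3 : (l : ℂ) + 2 ≠ 0 := by exact_mod_cast (by omega : l + 2 ≠ 0)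
    have h5 : (l.factorial : ℂ) ≠ 0 := by exact_mod_cast l.factorial_ne_zero
    field_simp
    ring
  · ring

lemma aux_I (l : ℕ) (k r : ℂ) :
    (Complex.I * k * r) ^ (l + 2) = - (Complex.I ^ l * k ^ (l + 2) * r ^ l * r ^ 2) := by
  rw [mul_pow, mul_pow, pow_add Complex.I, Complex.I_sq, pow_add r]
  ring

lemma aux_S1 (lam mu om : ℝ) (x y : E3) (hxy : x ≠ y) (i j : Fin 3) :
    HasSum (gammaSeries1 lam mu om x y i j)
      ((1 / (4 * (Real.pi : ℂ))) * (1 / (om : ℂ) ^ 2) * (if i = j then 1 else 0) *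
       ((kappaS mu om : ℂ) ^ 2 / ‖x - y‖ * Complex.exp (Complex.I * kappaS mu om * ‖x - y‖) +
        1 / (‖x - y‖ : ℂ) ^ 3 * ((Complex.exp (Complex.I * kappaS mu om * ‖x - y‖) *
            (Complex.I * kappaS mu om * ‖x - y‖ - 1) + 1)
        - (Complex.exp (Complex.I * kappaP lam mu om * ‖x - y‖) *
            (Complex.I * kappaP lam mu om * ‖x - y‖ - 1) + 1)))) := by
  have h0 : (‖x - y‖ : ℂ) ≠ 0 := by
    exact_mod_cast norm_ne_zero_iff.mpr (sub_ne_zero.mpr hxy)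
  refine aux_cg ((((aux_A (Complex.I * kappaS mu om * ‖x - y‖)).mul_left
      ((kappaS mu om : ℂ) ^ 2 / ‖x - y‖)).add
    (((aux_B (Complex.I * kappaS mu om * ‖x - y‖)).sub
      (aux_B (Complex.I * kappaP lam mu om * ‖x - y‖))).mul_left
      (1 / (‖x - y‖ : ℂ) ^ 3))).mul_left
      ((1 / (4 * (Real.pi : ℂ))) * (1 / (om : ℂ) ^ 2) * (if i = j then 1 else 0))) (fun l => ?_) rfl
  have h3 : (l : ℂ) + 2 ≠ 0 := by exact_mod_cast (by omega : l + 2 ≠ 0)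
  have h5 : (l.factorial : ℂ) ≠ 0 := by exact_mod_cast l.factorial_ne_zero
  unfold gammaSeries1
  rw [aux_I, aux_I]
  push_cast
  rw [zpow_sub₀ h0, zpow_natCast, zpow_one, mul_pow, mul_pow, pow_add _ l 2, pow_add _ l 2]
  generalize (if i = j then (1 : ℂ) else 0) = D
  generalize (1 / (4 * (Real.pi : ℂ))) = P
  generalize (1 / (om : ℂ) ^ 2) = O
  field_simp
  ring

lemma aux_S2 (lam mu om : ℝ) (x y : E3) (hxy : x ≠ y) (i j : Fin 3) :
    HasSum (gammaSeries2 lam mu om x y i j)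
      (-((1 / (4 * (Real.pi : ℂ))) * (1 / (om : ℂ) ^ 2) * ((x i - y i : ℝ) : ℂ) *
          ((x j - y j : ℝ) : ℂ) * (1 / (‖x - y‖ : ℂ) ^ 5)) *
       ((Complex.exp (Complex.I * kappaS mu om * ‖x - y‖) *
            ((Complex.I * kappaS mu om * ‖x - y‖) ^ 2
              - 3 * (Complex.I * kappaS mu om * ‖x - y‖) + 3) - 3)
        - (Complex.exp (Complex.I * kappaP lam mu om * ‖x - y‖) *
            ((Complex.I * kappaP lam mu om * ‖x - y‖) ^ 2
              - 3 * (Complex.I * kappaP lam mu om * ‖x - y‖) + 3) - 3))) := by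
  have h0 : (‖x - y‖ : ℂ) ≠ 0 := by
    exact_mod_cast norm_ne_zero_iff.mpr (sub_ne_zero.mpr hxy)
  refine aux_cg (((aux_C (Complex.I * kappaS mu om * ‖x - y‖)).sub
      (aux_C (Complex.I * kappaP lam mu om * ‖x - y‖))).mul_left
      (-((1 / (4 * (Real.pi : ℂ))) * (1 / (om : ℂ) ^ 2) * ((x i - y i : ℝ) : ℂ) *
          ((x j - y j : ℝ) : ℂ) * (1 / (‖x - y‖ : ℂ) ^ 5)))) (fun l => ?_) rfl
  have h3 : (l : ℂ) + 2 ≠ 0 := by exact_mod_cast (by omega : l + 2 ≠ 0)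
  have h5 : (l.factorial : ℂ) ≠ 0 := by exact_mod_cast l.factorial_ne_zero
  unfold gammaSeries2
  rw [aux_I, aux_I, div_eq_mul_one_div ((l : ℂ) - 1)]
  generalize ((x i - y i : ℝ) : ℂ) = X
  generalize ((x j - y j : ℝ) : ℂ) = Y
  push_cast
  have h7 : (‖x - y‖ : ℂ) ^ ((l : ℤ) - 3) = (‖x - y‖ : ℂ) ^ l / (‖x - y‖ : ℂ) ^ 3 := by
    rw [zpow_sub₀ h0, zpow_natCast]
    norm_cast
  rw [h7]
  generalize (1 / (4 * (Real.pi : ℂ))) = P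
  generalize (1 / (om : ℂ) ^ 2) = O
  field_simp
  ring

/-- Series representation (kupradzeten1) of the Kupradze matrix: both series
converge absolutely and
`Γ^ω(x,y)_{ij} = Σ_l gammaSeries1 − Σ_l gammaSeries2`. -/
theorem gamma_series_representation (lam mu om : ℝ) (hmu : 0 < mu)
    (hlm : 0 < 3 * lam + 2 * mu) (hom : 0 < om)
    (x y : E3) (hxy : x ≠ y) (i j : Fin 3) :
    Summable (fun l : ℕ => ‖gammaSeries1 lam mu om x y i j l‖) ∧
    Summable (fun l : ℕ => ‖gammaSeries2 lam mu om x y i j l‖) ∧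
    Gamma lam mu om x y i j
      = (∑' l : ℕ, gammaSeries1 lam mu om x y i j l)
        - (∑' l : ℕ, gammaSeries2 lam mu om x y i j l) := by
  have hS1 := aux_S1 lam mu om x y hxy i j
  have hS2 := aux_S2 lam mu om x y hxy i j
  refine ⟨hS1.summable.norm, hS2.summable.norm, ?_⟩
  rw [hS1.tsum_eq, hS2.tsum_eq]
  have h0 : (‖x - y‖ : ℂ) ≠ 0 := by
    exact_mod_cast norm_ne_zero_iff.mpr (sub_ne_zero.mpr hxy)
  have hp : (Real.pi : ℂ) ≠ 0 := by exact_mod_cast Real.pi_ne_zero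
  have ho : (om : ℂ) ≠ 0 := by exact_mod_cast hom.ne'
  have hk : 1 / (mu : ℂ) = (1 / (om : ℂ) ^ 2) * (kappaS mu om : ℂ) ^ 2 := by
    have : 1 / mu = (1 / om ^ 2) * (kappaS mu om) ^ 2 := by
      unfold kappaS
      rw [div_pow, Real.sq_sqrt hmu.le]
      field_simp
    exact_mod_cast congrArg (fun t : ℝ => (t : ℂ)) this
  obtain ⟨L1, hL1, hL1'⟩ := aux_fd2 (kappaS mu om) x y hxy j
  obtain ⟨L2, hL2, hL2'⟩ := aux_fd2 (kappaP lam mu om) x y hxy j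
  have hE : (fun x' : E3 => fderiv ℝ
            (fun x'' : E3 => Phi (kappaS mu om) x'' y - Phi (kappaP lam mu om) x'' y)
            x' (EuclideanSpace.single j 1)) =ᶠ[nhds x]
      (fun x' => auxG (kappaS mu om) y j x' - auxG (kappaP lam mu om) y j x') := by
    filter_upwards [isOpen_ne.mem_nhds hxy] with x' hx'
    exact aux_fd1 _ _ x' y hx' j
  unfold _root_.Gamma
  rw [hE.fderiv_eq, (hL1.fun_sub hL2).fderiv, _root_.sub_apply, hL1', hL2', hk]
  unfold Phi
  generalize (if i = j then (1 : ℂ) else 0) = D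
  generalize ((x i - y i : ℝ) : ℂ) = X
  generalize ((x j - y j : ℝ) : ℂ) = Y
  generalize Complex.exp (Complex.I * kappaS mu om * ‖x - y‖) = Es
  generalize Complex.exp (Complex.I * kappaP lam mu om * ‖x - y‖) = Ep
  generalize Complex.I = II
  field_simp
  ring

end
end

section
/- For all x, y ∈ ℝ³ with x ≠ y and all indices i, j, k ∈ {1,2,3}, the partial derivative of the Kupradze matrix with respect to the second variable satisfies ∂/∂y_k [Γ^ω(x,y)_{ij}] = −(1/(4π)) Σ_{l=0}^∞ (i^l/(l!(l+2))) ((l−1)/ω²) [ ((l+1)κ_s^{l+2} + κ_p^{l+2}) |x−y|^{l−3} (x_k−y_k) δ_{ij} − (κ_s^{l+2} − κ_p^{l+2}) ( (l−3) |x−y|^{l−5} (x_i−y_i)(x_j−y_j)(x_k−y_k) + |x−y|^{l−3} ( δ_{ik}(x_j−y_j) + (x_i−y_i)δ_{jk} ) ) ], the series converging absolutely. -/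
noncomputable section
open Real

/-- `l`-th term of the series (gradkupradzeten1) for `∂Γ^ω(x,y)_{ij}/∂y_k`. -/
def gradGammaSeries (lam mu om : ℝ) (x y : E3) (i j k : Fin 3) (l : ℕ) : ℂ :=
  (1 / (4 * (Real.pi : ℂ))) * (Complex.I ^ l / ((l.factorial : ℂ) * ((l : ℂ) + 2)))
    * (((l : ℂ) - 1) / (om : ℂ) ^ 2)
    * ( (((l : ℂ) + 1) * ((kappaS mu om : ℝ) : ℂ) ^ (l + 2)
          + ((kappaP lam mu om : ℝ) : ℂ) ^ (l + 2))
        * ((‖x - y‖ ^ ((l : ℤ) - 3) : ℝ) : ℂ) * ((x k - y k : ℝ) : ℂ)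
        * (if i = j then 1 else 0)
      - (((kappaS mu om : ℝ) : ℂ) ^ (l + 2) - ((kappaP lam mu om : ℝ) : ℂ) ^ (l + 2))
        * ( ((l : ℂ) - 3) * ((‖x - y‖ ^ ((l : ℤ) - 5) : ℝ) : ℂ)
              * ((x i - y i : ℝ) : ℂ) * ((x j - y j : ℝ) : ℂ) * ((x k - y k : ℝ) : ℂ)
          + ((‖x - y‖ ^ ((l : ℤ) - 3) : ℝ) : ℂ)
              * ((if i = k then 1 else 0) * ((x j - y j : ℝ) : ℂ)
                  + ((x i - y i : ℝ) : ℂ) * (if j = k then 1 else 0)) ) )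

def P0 (κ r : ℝ) : ℂ := Complex.exp (Complex.I * κ * r) / (4 * Real.pi * r)
def P1 (κ r : ℝ) : ℂ :=
  Complex.exp (Complex.I * κ * r) * (Complex.I * κ * r - 1) / (4 * Real.pi * r ^ 3)
def P2 (κ r : ℝ) : ℂ :=
  Complex.exp (Complex.I * κ * r) * ((Complex.I * κ * r) ^ 2 - 3 * (Complex.I * κ * r) + 3)
    / (4 * Real.pi * r ^ 5)
def P3 (κ r : ℝ) : ℂ :=
  Complex.exp (Complex.I * κ * r) * ((Complex.I * κ * r) ^ 3 - 6 * (Complex.I * κ * r) ^ 2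
    + 15 * (Complex.I * κ * r) - 15) / (4 * Real.pi * r ^ 7)

lemma hd_z (κ r : ℝ) : HasDerivAt (fun t : ℝ => Complex.I * κ * (t : ℂ)) (Complex.I * κ) r := by
  simpa using (Complex.ofRealCLM.hasDerivAt (x := r)).const_mul (Complex.I * κ)

lemma hd_pow (n : ℕ) (r : ℝ) : HasDerivAt (fun t : ℝ => 4 * (Real.pi : ℂ) * (t : ℂ) ^ n)
    (4 * (Real.pi : ℂ) * (n * (r : ℂ) ^ (n - 1))) r := by
  have h : HasDerivAt (fun t : ℝ => (t : ℂ)) 1 r := by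
    have h0 := (Complex.ofRealCLM.hasDerivAt (x := r))
    simp only [Complex.ofRealCLM_apply, Complex.ofReal_one] at h0
    exact h0
  simpa using (h.pow n).const_mul (4 * (Real.pi : ℂ))

lemma hd_P0 (κ r : ℝ) (hr : r ≠ 0) : HasDerivAt (P0 κ) (P1 κ r * r) r := by
  have hr' : (r : ℂ) ≠ 0 := by exact_mod_cast hr
  have hp : (Real.pi : ℂ) ≠ 0 := by exact_mod_cast Real.pi_ne_zero
  have h := (hd_z κ r).cexp.fun_div (hd_pow 1 r) (by simp [hr])
  refine (h.congr_deriv ?_).congr_of_eventuallyEq (Filter.Eventually.of_forall fun t => ?_)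
  · simp only [P1]; field_simp; push_cast; ring
  · simp [P0]

lemma hd_P1 (κ r : ℝ) (hr : r ≠ 0) : HasDerivAt (P1 κ) (P2 κ r * r) r := by
  have hr' : (r : ℂ) ≠ 0 := by exact_mod_cast hr
  have hp : (Real.pi : ℂ) ≠ 0 := by exact_mod_cast Real.pi_ne_zero
  have h := ((hd_z κ r).cexp.fun_mul ((hd_z κ r).sub_const 1)).fun_div (hd_pow 3 r) (by simp [hr])
  refine (h.congr_deriv ?_)
  simp only [P2]; field_simp; push_cast; ring

lemma hd_P2 (κ r : ℝ) (hr : r ≠ 0) : HasDerivAt (P2 κ) (P3 κ r * r) r := by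
  have hr' : (r : ℂ) ≠ 0 := by exact_mod_cast hr
  have hp : (Real.pi : ℂ) ≠ 0 := by exact_mod_cast Real.pi_ne_zero
  have h := ((hd_z κ r).cexp.fun_mul ((((hd_z κ r).fun_pow 2).fun_sub
    ((hd_z κ r).const_mul 3)).add_const 3)).fun_div (hd_pow 5 r) (by simp [hr])
  refine (h.congr_deriv ?_)
  simp only [P3]; field_simp; push_cast; ring

lemma hf_norm (x y : E3) (h : x ≠ y) :
    HasFDerivAt (fun x' : E3 => ‖x' - y‖) (‖x - y‖⁻¹ • innerSL ℝ (x - y)) x := by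
  have hn : ‖x - y‖ ≠ 0 := by simpa [sub_eq_zero] using h
  have h1 := ((hasFDerivAt_id (𝕜 := ℝ) x).sub_const y).norm_sq
  have h2 := h1.sqrt (by simpa using hn)
  refine (h2.congr_fderiv ?_).congr_of_eventuallyEq (Filter.Eventually.of_forall fun t => ?_)
  · ext v
    simp [Real.sqrt_sq]
    field_simp
  · simp [Real.sqrt_sq]

lemma hf_rad (g : ℝ → ℂ) (c : ℂ) (x y : E3) (h : x ≠ y)
    (hg : HasDerivAt g (c * (‖x - y‖ : ℝ)) ‖x - y‖) :
    HasFDerivAt (fun x' : E3 => g ‖x' - y‖) ((innerSL ℝ (x - y)).smulRight c) x := by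
  have hn : ‖x - y‖ ≠ 0 := by simpa [sub_eq_zero] using h
  have hn' : ((‖x - y‖ : ℝ) : ℂ) ≠ 0 := by exact_mod_cast hn
  refine (hg.hasFDerivAt.comp x (hf_norm x y h)).congr_fderiv ?_
  ext v
  simp
  field_simp

lemma hf_coord (x y : E3) (i : Fin 3) :
    HasFDerivAt (fun x' : E3 => ((x' i - y i : ℝ) : ℂ))
      (Complex.ofRealCLM.comp (EuclideanSpace.proj i : E3 →L[ℝ] ℝ)) x := by
  have h1 : HasFDerivAt (fun x' : E3 => x' i - y i) (EuclideanSpace.proj i : E3 →L[ℝ] ℝ) x :=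
    ((EuclideanSpace.proj i : E3 →L[ℝ] ℝ).hasFDerivAt).sub_const (y i)
  exact Complex.ofRealCLM.hasFDerivAt.comp x h1

lemma inner_single (x y : E3) (k : Fin 3) :
    innerSL ℝ (x - y) (EuclideanSpace.single k (1 : ℝ)) = x k - y k := by
  simp [EuclideanSpace.inner_single_right]

def dl (i j : Fin 3) : ℂ := if i = j then 1 else 0

lemma coord_single (i k : Fin 3) :
    (Complex.ofRealCLM.comp (EuclideanSpace.proj i : E3 →L[ℝ] ℝ)) (EuclideanSpace.single k (1 : ℝ))
      = dl i k := by
  by_cases h : i = k <;> simp [dl, h]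

lemma first_der (a b : ℝ) (x y : E3) (h : x ≠ y) (j : Fin 3) :
    fderiv ℝ (fun x'' : E3 => Phi a x'' y - Phi b x'' y) x (EuclideanSpace.single j 1)
      = (P1 a ‖x - y‖ - P1 b ‖x - y‖) * ((x j - y j : ℝ) : ℂ) := by
  have hn : ‖x - y‖ ≠ 0 := by simpa [sub_eq_zero] using h
  have h1 := (hf_rad _ _ x y h (hd_P0 a _ hn)).fun_sub (hf_rad _ _ x y h (hd_P0 b _ hn))
  have h2 : HasFDerivAt (fun x'' : E3 => Phi a x'' y - Phi b x'' y) _ x := h1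
  rw [h2.fderiv]
  simp only [_root_.sub_apply, ContinuousLinearMap.smulRight_apply, inner_single]
  simp only [Complex.real_smul]; ring

lemma second_der (a b : ℝ) (x y : E3) (h : x ≠ y) (i j : Fin 3) :
    fderiv ℝ (fun x' : E3 => fderiv ℝ (fun x'' : E3 => Phi a x'' y - Phi b x'' y) x'
      (EuclideanSpace.single j 1)) x (EuclideanSpace.single i 1)
      = (P2 a ‖x - y‖ - P2 b ‖x - y‖) * ((x i - y i : ℝ) : ℂ) * ((x j - y j : ℝ) : ℂ)
        + (P1 a ‖x - y‖ - P1 b ‖x - y‖) * dl j i := by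
  have hn : ‖x - y‖ ≠ 0 := by simpa [sub_eq_zero] using h
  have he : (fun x' : E3 => fderiv ℝ (fun x'' : E3 => Phi a x'' y - Phi b x'' y) x'
      (EuclideanSpace.single j 1)) =ᶠ[nhds x]
      fun x' => (P1 a ‖x' - y‖ - P1 b ‖x' - y‖) * ((x' j - y j : ℝ) : ℂ) := by
    filter_upwards [isOpen_ne.mem_nhds h] with x' hx'
    exact first_der a b x' y hx' j
  rw [he.fderiv_eq]
  have h1 := ((hf_rad _ _ x y h (hd_P1 a _ hn)).fun_sub (hf_rad _ _ x y h (hd_P1 b _ hn))).mul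
    (hf_coord x y j)
  have h2 : HasFDerivAt (fun x' => (P1 a ‖x' - y‖ - P1 b ‖x' - y‖) * ((x' j - y j : ℝ) : ℂ)) _ x :=
    h1
  rw [h2.fderiv]
  simp only [_root_.add_apply, _root_.smul_apply,
    _root_.sub_apply, ContinuousLinearMap.smulRight_apply, inner_single, coord_single]
  simp only [Complex.real_smul, smul_eq_mul]; ring

lemma third_der (lam mu om : ℝ) (x y : E3) (h : x ≠ y) (i j k : Fin 3) :
    fderiv ℝ (fun y' : E3 => Gamma lam mu om x y' i j) y (EuclideanSpace.single k 1)
      = - ((1 / (mu : ℂ)) * P1 (kappaS mu om) ‖x - y‖ * ((x k - y k : ℝ) : ℂ) * dl i j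
        + (1 / (om : ℂ) ^ 2) *
        ((P3 (kappaS mu om) ‖x - y‖ - P3 (kappaP lam mu om) ‖x - y‖) * ((x i - y i : ℝ) : ℂ)
          * ((x j - y j : ℝ) : ℂ) * ((x k - y k : ℝ) : ℂ)
        + (P2 (kappaS mu om) ‖x - y‖ - P2 (kappaP lam mu om) ‖x - y‖) *
          (dl i j * ((x k - y k : ℝ) : ℂ) + dl i k * ((x j - y j : ℝ) : ℂ)
            + ((x i - y i : ℝ) : ℂ) * dl j k))) := by
  have hn : ‖y - x‖ ≠ 0 := by simpa [sub_eq_zero] using h.symm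
  have he : (fun y' : E3 => Gamma lam mu om x y' i j) =ᶠ[nhds y] fun y' =>
      (1 / (mu : ℂ)) * dl i j * P0 (kappaS mu om) ‖y' - x‖ + (1 / (om : ℂ) ^ 2) *
      ((P2 (kappaS mu om) ‖y' - x‖ - P2 (kappaP lam mu om) ‖y' - x‖)
        * (((y' i - x i : ℝ) : ℂ) * ((y' j - x j : ℝ) : ℂ))
        + dl i j * (P1 (kappaS mu om) ‖y' - x‖ - P1 (kappaP lam mu om) ‖y' - x‖)) := by
    filter_upwards [isOpen_ne.mem_nhds h.symm] with y' hy'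
    simp only [_root_.Gamma]
    rw [second_der _ _ x y' hy'.symm, norm_sub_rev x y']
    have e1 : Phi (kappaS mu om) x y' = P0 (kappaS mu om) ‖y' - x‖ := by
      simp [Phi, P0, norm_sub_rev x y']
    have e2 : dl j i = dl i j := by simp [dl, eq_comm]
    rw [e1, e2]; simp only [dl]; push_cast; ring
  rw [he.fderiv_eq]
  have s := h.symm
  have h1 := ((hf_rad _ _ y x s (hd_P0 (kappaS mu om) _ hn)).const_mul
      ((1 / (mu : ℂ)) * dl i j)).fun_add
    (((((hf_rad _ _ y x s (hd_P2 (kappaS mu om) _ hn)).fun_sub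
      (hf_rad _ _ y x s (hd_P2 (kappaP lam mu om) _ hn))).fun_mul
      ((hf_coord y x i).fun_mul (hf_coord y x j))).fun_add
      (((hf_rad _ _ y x s (hd_P1 (kappaS mu om) _ hn)).fun_sub
      (hf_rad _ _ y x s (hd_P1 (kappaP lam mu om) _ hn))).const_mul (dl i j))).const_mul
      (1 / (om : ℂ) ^ 2))
  rw [h1.fderiv]
  simp only [_root_.add_apply, _root_.smul_apply,
    _root_.sub_apply, ContinuousLinearMap.smulRight_apply, inner_single, coord_single]
  simp only [Complex.real_smul, smul_eq_mul, norm_sub_rev x y]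
  push_cast; ring

lemma hs_congr {f g : ℕ → ℂ} {a b : ℂ} (h : HasSum f a) (hf : ∀ m, g m = f m) (hb : b = a) :
    HasSum g b := by
  rw [hb, show g = f from funext hf]; exact h

lemma hs0 (z : ℂ) : HasSum (fun m : ℕ => z ^ m / (m.factorial : ℂ)) (Complex.exp z) := by
  rw [Complex.exp_eq_exp_ℂ]; exact NormedSpace.expSeries_div_hasSum_exp z

lemma hs_shift (z s : ℂ) (f g : ℕ → ℂ) (h : HasSum (fun m : ℕ => f m * (z ^ m / (m.factorial : ℂ))) s)
    (h0 : g 0 = 0) (hg : ∀ m : ℕ, g (m + 1) = f m * ((m : ℂ) + 1)) :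
    HasSum (fun m : ℕ => g m * (z ^ m / (m.factorial : ℂ))) (z * s) := by
  rw [← hasSum_nat_add_iff' 1]
  simp only [Finset.range_one, Finset.sum_singleton, h0, zero_mul, sub_zero]
  refine (h.mul_left z).congr_fun ?_
  intro m
  have h1 : ((m : ℂ) + 1) ≠ 0 := by exact_mod_cast Nat.succ_ne_zero m
  have h2 : (m.factorial : ℂ) ≠ 0 := by exact_mod_cast m.factorial_ne_zero
  rw [hg, Nat.factorial_succ]; push_cast
  field_simp
  ring

lemma hs1 (z : ℂ) : HasSum (fun m : ℕ => (m : ℂ) * (z ^ m / (m.factorial : ℂ)))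
    (z * Complex.exp z) :=
  hs_shift z _ (fun _ => 1) _ (by simpa using hs0 z) (by simp) (by simp)

lemma hs2 (z : ℂ) : HasSum (fun m : ℕ => (m : ℂ) ^ 2 * (z ^ m / (m.factorial : ℂ)))
    (z * (z * Complex.exp z + Complex.exp z)) :=
  hs_shift z _ (fun m => (m : ℂ) + 1) (fun m => (m : ℂ) ^ 2)
    (by simpa [add_mul] using (hs1 z).add (hs0 z)) (by simp) (by intro m; push_cast; ring)

lemma hs3 (z : ℂ) : HasSum (fun m : ℕ => (m : ℂ) ^ 3 * (z ^ m / (m.factorial : ℂ)))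
    (z * (z * (z * Complex.exp z + Complex.exp z) + 2 * (z * Complex.exp z) + Complex.exp z)) :=
  hs_shift z _ (fun m => (m : ℂ) ^ 2 + 2 * m + 1) (fun m => (m : ℂ) ^ 3)
    (by simpa [add_mul, mul_assoc] using ((hs2 z).add ((hs1 z).mul_left 2)).add (hs0 z)) (by simp)
    (by intro m; push_cast; ring)

def T1 (κ r : ℝ) (m : ℕ) : ℂ := ((m : ℂ) - 1) *
  ((Complex.I * κ * r) ^ m / (m.factorial : ℂ)) / (4 * Real.pi * r ^ 3)
def T2 (κ r : ℝ) (m : ℕ) : ℂ := ((m : ℂ) - 1) * ((m : ℂ) - 3) *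
  ((Complex.I * κ * r) ^ m / (m.factorial : ℂ)) / (4 * Real.pi * r ^ 5)
def T3 (κ r : ℝ) (m : ℕ) : ℂ := ((m : ℂ) - 1) * ((m : ℂ) - 3) * ((m : ℂ) - 5) *
  ((Complex.I * κ * r) ^ m / (m.factorial : ℂ)) / (4 * Real.pi * r ^ 7)

lemma hT1 (κ r : ℝ) : HasSum (T1 κ r) (P1 κ r) := by
  have h := ((hs1 (Complex.I * κ * r)).sub (hs0 (Complex.I * κ * r))).div_const
    (4 * (Real.pi : ℂ) * (r : ℂ) ^ 3)
  refine hs_congr h (fun m => ?_) ?_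
  · simp only [T1]; ring
  · simp only [P1]; ring

lemma hT2 (κ r : ℝ) : HasSum (T2 κ r) (P2 κ r) := by
  have h := (((hs2 (Complex.I * κ * r)).sub ((hs1 (Complex.I * κ * r)).mul_left 4)).add
    ((hs0 (Complex.I * κ * r)).mul_left 3)).div_const (4 * (Real.pi : ℂ) * (r : ℂ) ^ 5)
  refine hs_congr h (fun m => ?_) ?_
  · simp only [T2]; ring
  · simp only [P2]; ring

lemma hT3 (κ r : ℝ) : HasSum (T3 κ r) (P3 κ r) := by
  have h := ((((hs3 (Complex.I * κ * r)).sub ((hs2 (Complex.I * κ * r)).mul_left 9)).add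
    ((hs1 (Complex.I * κ * r)).mul_left 23)).sub
    ((hs0 (Complex.I * κ * r)).mul_left 15)).div_const (4 * (Real.pi : ℂ) * (r : ℂ) ^ 7)
  refine hs_congr h (fun m => ?_) ?_
  · simp only [T3]; ring
  · simp only [P3]; ring

lemma hT2d (a b r : ℝ) : HasSum (fun l => T2 a r (l + 2) - T2 b r (l + 2)) (P2 a r - P2 b r) := by
  have h := (hasSum_nat_add_iff' 2).2 ((hT2 a r).sub (hT2 b r))
  simpa [Finset.sum_range_succ, T2] using h

lemma hT3d (a b r : ℝ) : HasSum (fun l => T3 a r (l + 2) - T3 b r (l + 2)) (P3 a r - P3 b r) := by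
  have h := (hasSum_nat_add_iff' 2).2 ((hT3 a r).sub (hT3 b r))
  simpa [Finset.sum_range_succ, T3] using h

lemma term_eq (lam mu om : ℝ) (hmu : 0 < mu) (hom : 0 < om)
    (x y : E3) (hxy : x ≠ y) (i j k : Fin 3) (l : ℕ) :
    gradGammaSeries lam mu om x y i j k l =
      (1 / (mu : ℂ)) * T1 (kappaS mu om) ‖x - y‖ l * ((x k - y k : ℝ) : ℂ) * dl i j
        + (1 / (om : ℂ) ^ 2) *
        ((T3 (kappaS mu om) ‖x - y‖ (l + 2) - T3 (kappaP lam mu om) ‖x - y‖ (l + 2))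
          * ((x i - y i : ℝ) : ℂ) * ((x j - y j : ℝ) : ℂ) * ((x k - y k : ℝ) : ℂ)
        + (T2 (kappaS mu om) ‖x - y‖ (l + 2) - T2 (kappaP lam mu om) ‖x - y‖ (l + 2)) *
          (dl i j * ((x k - y k : ℝ) : ℂ) + dl i k * ((x j - y j : ℝ) : ℂ)
            + ((x i - y i : ℝ) : ℂ) * dl j k)) := by
  have hn : ‖x - y‖ ≠ 0 := by simpa [sub_eq_zero] using hxy
  have hks : (1 / (mu : ℂ)) = ((kappaS mu om : ℝ) : ℂ) ^ 2 / (om : ℂ) ^ 2 := by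
    have : 1 / mu = (kappaS mu om) ^ 2 / om ^ 2 := by
      rw [kappaS, div_pow, Real.sq_sqrt hmu.le]; field_simp
    exact_mod_cast congrArg (fun t : ℝ => (t : ℂ)) this
  have e3 : ‖x - y‖ ^ ((l : ℤ) - 3) = ‖x - y‖ ^ l / ‖x - y‖ ^ 3 := by
    rw [zpow_sub₀ hn]; norm_cast
  have e5 : ‖x - y‖ ^ ((l : ℤ) - 5) = ‖x - y‖ ^ l / ‖x - y‖ ^ 5 := by
    rw [zpow_sub₀ hn]; norm_cast
  simp only [gradGammaSeries, T1, T2, T3]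
  rw [hks, e3, e5, Nat.factorial_succ, Nat.factorial_succ]
  change _ * _ * _ * (_ * _ * _ * dl i j - _ * (_ + _ * (dl i k * _ + _ * dl j k))) = _
  have hn' : ((‖x - y‖ : ℝ) : ℂ) ≠ 0 := by exact_mod_cast hn
  have hp : (Real.pi : ℂ) ≠ 0 := by exact_mod_cast Real.pi_ne_zero
  have ho : (om : ℂ) ≠ 0 := by exact_mod_cast hom.ne'
  have h1 : ((l : ℂ) + 1) ≠ 0 := by exact_mod_cast Nat.succ_ne_zero l
  have h1' : ((l : ℂ) + 1 + 1) ≠ 0 := by exact_mod_cast Nat.succ_ne_zero (l + 1)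
  have h2 : ((l : ℂ) + 2) ≠ 0 := by exact_mod_cast Nat.succ_ne_zero (l + 1)
  have hf : (l.factorial : ℂ) ≠ 0 := by exact_mod_cast l.factorial_ne_zero
  have h12 : ((l : ℂ) + 1 + 1) = (l : ℂ) + 2 := by ring
  push_cast
  simp only [mul_pow, pow_add Complex.I l 2, Complex.I_sq]
  rw [h12]
  generalize ((kappaS mu om : ℝ) : ℂ) = a
  generalize ((kappaP lam mu om : ℝ) : ℂ) = b
  generalize dl i j = d1
  generalize dl i k = d2
  generalize dl j k = d3
  generalize ((‖x - y‖ : ℝ) : ℂ) = r at *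
  field_simp
  ring

/-- Series representation (gradkupradzeten1) of the gradient of the Kupradze
matrix in the second variable: the series converges absolutely and
`∂/∂y_k Γ^ω(x,y)_{ij} = − Σ_l gradGammaSeries`. -/
theorem grad_gamma_series_representation (lam mu om : ℝ) (hmu : 0 < mu)
    (hlm : 0 < 3 * lam + 2 * mu) (hom : 0 < om)
    (x y : E3) (hxy : x ≠ y) (i j k : Fin 3) :
    Summable (fun l : ℕ => ‖gradGammaSeries lam mu om x y i j k l‖) ∧
    fderiv ℝ (fun y' : E3 => Gamma lam mu om x y' i j) y (EuclideanSpace.single k 1)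
      = - ∑' l : ℕ, gradGammaSeries lam mu om x y i j k l := by
  have hs := fun l => term_eq lam mu om hmu hom x y hxy i j k l
  have H0 := (((((hT1 (kappaS mu om) ‖x - y‖).mul_left (1 / (mu : ℂ))).mul_right
      ((x k - y k : ℝ) : ℂ)).mul_right (dl i j)).add
      ((((((hT3d (kappaS mu om) (kappaP lam mu om) ‖x - y‖).mul_right
      ((x i - y i : ℝ) : ℂ)).mul_right ((x j - y j : ℝ) : ℂ)).mul_right ((x k - y k : ℝ) : ℂ)).add
      ((hT2d (kappaS mu om) (kappaP lam mu om) ‖x - y‖).mul_right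
        (dl i j * ((x k - y k : ℝ) : ℂ) + dl i k * ((x j - y j : ℝ) : ℂ)
            + ((x i - y i : ℝ) : ℂ) * dl j k))).mul_left (1 / (om : ℂ) ^ 2)))
  have H := hs_congr H0 hs rfl
  refine ⟨H.summable.norm, ?_⟩
  rw [H.tsum_eq, third_der lam mu om x y hxy i j k]

end
end
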